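/- (Talagrand's convex distance inequality) Let (Ω, μ) be a finite probability space and let μ^m be the product measure on Ω^m. For every A ⊆ Ω^m with μ^m(A) > 0, one has ∫_{Ω^m} exp( d_T(x, A)² / 4 ) dμ^m(x) ≤ 1/μ^m(A), and consequently, for every s > 0, P{ x ∈ Ω^m : d_T(x, A) ≥ s } ≤ e^{−s²/4} / μ^m(A). -/

import Mathlib

/-- Probability of a set `S ⊆ Ω^m` under the product measure induced by
the probability mass function `μ` on the finite space `Ω`. -/
noncomputable def Pr {Ω : Type*} [Fintype Ω] {m : ℕ} (μ : Ω → ℝ) (S : Set (Fin m → Ω)) : ℝ :=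
  ∑ x : Fin m → Ω, S.indicator (fun y => ∏ j, μ (y j)) x

/-- Talagrand's convex distance from a point `x ∈ Ω^m` to a set `A ⊆ Ω^m`:
`d_T(x,A) = sup { inf_{y ∈ A} ∑ j, α j · 1(x j ≠ y j) : α j ≥ 0, ∑ j, α j ² ≤ 1 }`. -/
noncomputable def convexDist {Ω : Type*} [DecidableEq Ω] {m : ℕ}
    (x : Fin m → Ω) (A : Set (Fin m → Ω)) : ℝ :=
  sSup { z : ℝ | ∃ α : Fin m → ℝ, (∀ j, 0 ≤ α j) ∧ (∑ j, α j ^ 2) ≤ 1 ∧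
    z = sInf { t : ℝ | ∃ y ∈ A, t = ∑ j, if x j ≠ y j then α j else 0 } }

/-!
Write `V(x, A)` for the convex hull of the `0`-`1` vectors recording where `x` differs from the
points of `A`, and `N(x, A)` for the least squared Euclidean norm on `V(x, A)`. Cauchy–Schwarz gives
`d_T(x, A)² ≤ N(x, A)`, so it suffices to bound the exponential moment of `N / 4`, by induction on
the dimension. Let `B` be the projection of `A` along the first coordinate and `A_ω ⊆ B` its fibre
over `ω`. A vector of `V(x, A_ω)` extends by `0`, and one of `V(x, B)` by some `c ∈ [0, 1]`, to a
vector of `V((ω, x), A)`; convexity then yields, for every `θ ∈ [0, 1]` (only for `θ = 0` if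
`A_ω` is empty),
`N((ω, x), A) ≤ (1 - θ)² + θ N(x, A_ω) + (1 - θ) N(x, B)`.
Hölder's inequality and the best choice of `θ` bound the moment over the fibre by
`(2 - P(A_ω) / P(B)) / P(B)`. Averaging over `ω` and `t (2 - t) ≤ 1` close the induction.
-/

section MismatchHull

variable {ι Ω : Type*} [DecidableEq Ω] {x : ι → Ω} {A : Set (ι → Ω)} {v : ι → ℝ}

/-- The `0`-`1` vector of the coordinates where `x` and `y` differ. -/
def mismatch (x y : ι → Ω) : ι → ℝ := fun j => if x j = y j then 0 else 1

/-- The convex hull of the mismatch vectors between `x` and the points of `A`. -/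
def mismatchHull (x : ι → Ω) (A : Set (ι → Ω)) : Set (ι → ℝ) := convexHull ℝ (mismatch x '' A)

/-- The squared Euclidean distance from the origin to `mismatchHull x A`, with the junk value `0`
for empty `A`. By minimax duality it is the square of the convex distance; unlike the supremum
defining the latter, it obeys a recursion in the dimension. -/
noncomputable def hullSqDist [Fintype ι] (x : ι → Ω) (A : Set (ι → Ω)) : ℝ :=
  sInf ((fun v => ∑ j, v j ^ 2) '' mismatchHull x A)

lemma mismatch_mem_Icc (x y : ι → Ω) (j : ι) : mismatch x y j ∈ Set.Icc (0 : ℝ) 1 := by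
  unfold mismatch
  split_ifs <;> simp

lemma mem_Icc_of_mem_mismatchHull (hv : v ∈ mismatchHull x A) (j : ι) :
    v j ∈ Set.Icc (0 : ℝ) 1 := by
  have hsub : mismatch x '' A ⊆ (LinearMap.proj j : (ι → ℝ) →ₗ[ℝ] ℝ) ⁻¹' Set.Icc 0 1 :=
    Set.image_subset_iff.2 fun y _ => mismatch_mem_Icc x y j
  exact convexHull_min hsub ((convex_Icc 0 1).linear_preimage _) hv

lemma isCompact_mismatchHull [Finite ι] (x : ι → Ω) (A : Set (ι → Ω)) :
    IsCompact (mismatchHull x A) := by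
  refine Set.Finite.isCompact_convexHull ℝ ?_
  refine (Set.Finite.pi' fun _ : ι => Set.toFinite ({0, 1} : Set ℝ)).subset ?_
  rintro _ ⟨y, -, rfl⟩ j
  by_cases h : x j = y j <;> simp [mismatch, h]

variable [Fintype ι]

lemma hullSqDist_le (hv : v ∈ mismatchHull x A) : hullSqDist x A ≤ ∑ j, v j ^ 2 := by
  refine csInf_le ⟨0, ?_⟩ (Set.mem_image_of_mem _ hv)
  rintro _ ⟨u, -, rfl⟩
  positivity

lemma exists_mem_mismatchHull_sum_sq_eq (x : ι → Ω) (hA : A.Nonempty) :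
    ∃ v ∈ mismatchHull x A, ∑ j, v j ^ 2 = hullSqDist x A :=
  ((isCompact_mismatchHull x A).image (by fun_prop)).sInf_mem
    ((hA.image _).convexHull.image _)

end MismatchHull

section ConvexDist

variable {Ω : Type*} [DecidableEq Ω] {m : ℕ} {x : Fin m → Ω} {A : Set (Fin m → Ω)}

lemma sum_mismatch_weight_nonneg {α : Fin m → ℝ} (hα : ∀ j, 0 ≤ α j) (x y : Fin m → Ω) :
    0 ≤ ∑ j, if x j ≠ y j then α j else 0 :=
  Finset.sum_nonneg fun j _ => ite_nonneg (hα j) le_rfl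

lemma convexDist_nonneg (x : Fin m → Ω) (A : Set (Fin m → Ω)) : 0 ≤ convexDist x A := by
  refine Real.sSup_nonneg ?_
  rintro _ ⟨α, hα, -, rfl⟩
  refine Real.sInf_nonneg ?_
  rintro _ ⟨y, -, rfl⟩
  exact sum_mismatch_weight_nonneg hα x y

lemma sInf_sum_mismatch_le_sum_mul {α v : Fin m → ℝ} (hα : ∀ j, 0 ≤ α j)
    (hv : v ∈ mismatchHull x A) :
    sInf {t : ℝ | ∃ y ∈ A, t = ∑ j, if x j ≠ y j then α j else 0} ≤ ∑ j, α j * v j := by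
  set c := sInf {t : ℝ | ∃ y ∈ A, t = ∑ j, if x j ≠ y j then α j else 0}
  have hbdd : BddBelow {t : ℝ | ∃ y ∈ A, t = ∑ j, if x j ≠ y j then α j else 0} :=
    ⟨0, by rintro _ ⟨y, -, rfl⟩; exact sum_mismatch_weight_nonneg hα x y⟩
  have hvertices : mismatch x '' A ⊆ {u | c ≤ ∑ j, α j * u j} := by
    rintro _ ⟨y, hy, rfl⟩
    exact csInf_le hbdd ⟨y, hy, by simp [mismatch]⟩
  have hlinear : IsLinearMap ℝ fun u : Fin m → ℝ => ∑ j, α j * u j :=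
    (dotProductBilin ℝ ℝ α).isLinear
  exact convexHull_min hvertices (convex_halfSpace_ge hlinear c) hv

lemma convexDist_sq_le_hullSqDist (x : Fin m → Ω) (hA : A.Nonempty) :
    convexDist x A ^ 2 ≤ hullSqDist x A := by
  obtain ⟨v, hv, hvmin⟩ := exists_mem_mismatchHull_sum_sq_eq x hA
  rw [← hvmin]
  refine (Real.le_sqrt (convexDist_nonneg x A) (by positivity)).1 ?_
  refine Real.sSup_le ?_ (Real.sqrt_nonneg _)
  rintro _ ⟨α, hα, hα1, rfl⟩
  refine (sInf_sum_mismatch_le_sum_mul hα hv).trans (Real.le_sqrt_of_sq_le ?_)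
  calc (∑ j, α j * v j) ^ 2 ≤ (∑ j, α j ^ 2) * ∑ j, v j ^ 2 :=
        Finset.sum_mul_sq_le_sq_mul_sq _ _ _
    _ ≤ ∑ j, v j ^ 2 := mul_le_of_le_one_left (by positivity) hα1

end ConvexDist

section Recursion

variable {Ω : Type*} {m : ℕ}

/-- The fibre of `A` over the first coordinate `ω`. -/
def headFiber (ω : Ω) (A : Set (Fin (m + 1) → Ω)) : Set (Fin m → Ω) :=
  {y | (Fin.cons ω y : Fin (m + 1) → Ω) ∈ A}

lemma headFiber_subset_image_tail (ω : Ω) (A : Set (Fin (m + 1) → Ω)) :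
    headFiber ω A ⊆ Fin.tail '' A :=
  fun _ hy => ⟨_, hy, Fin.tail_cons _ _⟩

variable [DecidableEq Ω] {x : Fin (m + 1) → Ω} {A : Set (Fin (m + 1) → Ω)}

lemma mismatch_cons_head (x : Fin (m + 1) → Ω) (y : Fin m → Ω) :
    mismatch x (Fin.cons (x 0) y) = Fin.cons 0 (mismatch (Fin.tail x) y) :=
  funext (Fin.cases (by simp [mismatch]) fun _ => rfl)

lemma cons_zero_mem_mismatchHull {u : Fin m → ℝ}
    (hu : u ∈ mismatchHull (Fin.tail x) (headFiber (x 0) A)) :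
    (Fin.cons 0 u : Fin (m + 1) → ℝ) ∈ mismatchHull x A := by
  let consZero : (Fin m → ℝ) →ₗ[ℝ] (Fin (m + 1) → ℝ) :=
    (Fin.consLinearEquiv ℝ fun _ => ℝ).toLinearMap ∘ₗ LinearMap.inr ℝ ℝ (Fin m → ℝ)
  have hvertices : mismatch (Fin.tail x) '' headFiber (x 0) A ⊆ consZero ⁻¹' mismatchHull x A := by
    rintro _ ⟨y, hy, rfl⟩
    exact subset_convexHull ℝ _ ⟨Fin.cons (x 0) y, hy, mismatch_cons_head x y⟩
  exact convexHull_min hvertices ((convex_convexHull ℝ _).linear_preimage consZero) hu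

lemma image_tail_mismatchHull (x : Fin (m + 1) → Ω) (A : Set (Fin (m + 1) → Ω)) :
    Fin.tail '' mismatchHull x A = mismatchHull (Fin.tail x) (Fin.tail '' A) := by
  have htail := (LinearMap.funLeft ℝ ℝ (Fin.succ : Fin m → Fin (m + 1))).image_convexHull
    (mismatch x '' A)
  rw [Set.image_image] at htail
  simpa only [mismatchHull, Set.image_image] using! htail

lemma exists_cons_mem_mismatchHull {w : Fin m → ℝ}
    (hw : w ∈ mismatchHull (Fin.tail x) (Fin.tail '' A)) :
    ∃ c ∈ Set.Icc (0 : ℝ) 1, (Fin.cons c w : Fin (m + 1) → ℝ) ∈ mismatchHull x A := by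
  rw [← image_tail_mismatchHull] at hw
  obtain ⟨v, hv, rfl⟩ := hw
  exact ⟨v 0, mem_Icc_of_mem_mismatchHull hv 0, by rwa [Fin.cons_self_tail]⟩

lemma hullSqDist_le_one_add (x : Fin (m + 1) → Ω) (hA : A.Nonempty) :
    hullSqDist x A ≤ 1 + hullSqDist (Fin.tail x) (Fin.tail '' A) := by
  obtain ⟨w, hw, hwmin⟩ := exists_mem_mismatchHull_sum_sq_eq (Fin.tail x) (hA.image Fin.tail)
  obtain ⟨c, ⟨hc0, hc1⟩, hc⟩ := exists_cons_mem_mismatchHull hw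
  refine (hullSqDist_le hc).trans ?_
  simpa [Fin.sum_univ_succ, hwmin, abs_of_nonneg hc0] using hc1

lemma hullSqDist_le_convexComb {θ : ℝ} (hθ : θ ∈ Set.Icc (0 : ℝ) 1)
    (hfiber : (headFiber (x 0) A).Nonempty) :
    hullSqDist x A ≤ (1 - θ) ^ 2 + (θ * hullSqDist (Fin.tail x) (headFiber (x 0) A) +
      (1 - θ) * hullSqDist (Fin.tail x) (Fin.tail '' A)) := by
  have hθ' : 0 ≤ 1 - θ := sub_nonneg.2 hθ.2
  obtain ⟨u, hu, humin⟩ := exists_mem_mismatchHull_sum_sq_eq (Fin.tail x) hfiber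
  obtain ⟨w, hw, hwmin⟩ := exists_mem_mismatchHull_sum_sq_eq (Fin.tail x)
    (hfiber.mono (headFiber_subset_image_tail (x 0) A))
  obtain ⟨c, ⟨hc0, hc1⟩, hc⟩ := exists_cons_mem_mismatchHull hw
  have hmem := convex_convexHull ℝ _ (cons_zero_mem_mismatchHull hu) hc hθ.1 hθ'
    (add_sub_cancel θ 1)
  have hhead : ((1 - θ) * c) ^ 2 ≤ (1 - θ) ^ 2 :=
    pow_le_pow_left₀ (mul_nonneg hθ' hc0) (mul_le_of_le_one_right hθ' hc1) 2
  have htail (j : Fin m) :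
      (θ * u j + (1 - θ) * w j) ^ 2 ≤ θ * u j ^ 2 + (1 - θ) * w j ^ 2 :=
    even_two.convexOn_pow.2 (Set.mem_univ (u j)) (Set.mem_univ (w j)) hθ.1 hθ'
      (add_sub_cancel θ 1)
  calc hullSqDist x A
      ≤ ((1 - θ) * c) ^ 2 + ∑ j, (θ * u j + (1 - θ) * w j) ^ 2 := by
        simpa [Fin.sum_univ_succ] using hullSqDist_le hmem
    _ ≤ (1 - θ) ^ 2 + ∑ j, (θ * u j ^ 2 + (1 - θ) * w j ^ 2) :=
        add_le_add hhead (Finset.sum_le_sum fun j _ => htail j)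
    _ = _ := by rw [Finset.sum_add_distrib, ← Finset.mul_sum, ← Finset.mul_sum, humin, hwmin]

end Recursion

section ExponentialMoments

lemma exp_neg_le_quadratic {t : ℝ} (ht : 0 ≤ t) : Real.exp (-t) ≤ 1 - t + t ^ 2 / 2 := by
  have hquad := Real.quadratic_le_exp_of_nonneg ht
  rw [Real.exp_neg, inv_le_iff_one_le_mul₀ (Real.exp_pos t)]
  nlinarith [mul_le_mul_of_nonneg_left hquad (by nlinarith [sq_nonneg (t - 1)] :
    0 ≤ 1 - t + t ^ 2 / 2), sq_nonneg (t ^ 2)]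

lemma exp_sub_sq_add_exp_neg_le_two {t : ℝ} (ht0 : 0 ≤ t) (ht1 : t ≤ 1 / 2) :
    Real.exp (t - t ^ 2) + Real.exp (-t) ≤ 2 := by
  have hs0 : 0 ≤ t - t ^ 2 := by nlinarith
  have hst : t - t ^ 2 ≤ t := sub_le_self t (sq_nonneg t)
  have hcubic := Real.exp_bound' hs0 (by linarith) (n := 3) (by norm_num)
  norm_num [Finset.sum_range_succ, Nat.factorial] at hcubic
  have hs3 : (t - t ^ 2) ^ 3 ≤ t ^ 3 := pow_le_pow_left₀ hs0 hst 3
  have ht4 : t ^ 4 ≤ t ^ 3 * (1 / 2) := by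
    rw [pow_succ t 3]
    gcongr
  linarith [exp_neg_le_quadratic ht0, pow_nonneg ht0 3]

lemma exp_one_quarter_le : Real.exp (1 / 4) ≤ 4 / 3 := by
  have h := Real.exp_bound_div_one_sub_of_interval (x := 1 / 4) (by norm_num) (by norm_num)
  norm_num at h ⊢
  exact h

lemma exists_rpow_neg_mul_exp_le {r : ℝ} (hr0 : 0 < r) (hr1 : r ≤ 1) :
    ∃ θ ∈ Set.Icc (0 : ℝ) 1, r ^ (-θ) * Real.exp ((1 - θ) ^ 2 / 4) ≤ 2 - r := by
  have hlog : Real.log r ≤ 0 := Real.log_nonpos hr0.le hr1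
  rcases le_total (-(1 / 2)) (Real.log r) with h | h
  · -- The exponent `(1 - θ)² / 4 - θ log r` is minimal at `θ = 1 + 2 log r`.
    refine ⟨1 + 2 * Real.log r, ⟨by linarith, by linarith⟩, ?_⟩
    have hexp := exp_sub_sq_add_exp_neg_le_two (t := -Real.log r) (by linarith) (by linarith)
    rw [neg_neg, Real.exp_log hr0] at hexp
    rw [Real.rpow_def_of_pos hr0, ← Real.exp_add, le_sub_iff_add_le]
    convert hexp using 3
    ring
  · have hr : r ≤ 2 / 3 := by
      have hhalf := Real.add_one_le_exp (1 / 2)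
      rw [Real.log_le_iff_le_exp hr0, Real.exp_neg] at h
      exact h.trans (inv_le_of_inv_le₀ (by norm_num) (by linarith))
    refine ⟨0, ⟨le_rfl, zero_le_one⟩, ?_⟩
    rw [neg_zero, Real.rpow_zero, one_mul, sub_zero, one_pow]
    linarith [exp_one_quarter_le]

variable {ι : Type*} [Fintype ι] {p : ι → ℝ}

lemma sum_mul_exp_convexComb_le (hp : ∀ i, 0 ≤ p i) (a b : ι → ℝ) {θ : ℝ}
    (hθ : θ ∈ Set.Icc (0 : ℝ) 1) :
    ∑ i, p i * Real.exp (θ * a i + (1 - θ) * b i) ≤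
      (∑ i, p i * Real.exp (a i)) ^ θ * (∑ i, p i * Real.exp (b i)) ^ (1 - θ) := by
  rcases hθ.1.eq_or_lt with rfl | hθ0
  · simp
  rcases hθ.2.eq_or_lt with rfl | hθ1
  · simp
  have hθ' : 0 < 1 - θ := sub_pos.2 hθ1
  have hconj : θ⁻¹.HolderConjugate (1 - θ)⁻¹ := by
    rw [Real.holderConjugate_iff]
    exact ⟨(one_lt_inv₀ hθ0).2 hθ1, by simp⟩
  have ha (i : ι) : 0 ≤ p i * Real.exp (a i) := mul_nonneg (hp i) (Real.exp_nonneg _)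
  have hb (i : ι) : 0 ≤ p i * Real.exp (b i) := mul_nonneg (hp i) (Real.exp_nonneg _)
  have hsplit (i : ι) : p i * Real.exp (θ * a i + (1 - θ) * b i) =
      (p i * Real.exp (a i)) ^ θ * (p i * Real.exp (b i)) ^ (1 - θ) := by
    rw [Real.mul_rpow (hp i) (Real.exp_nonneg _), Real.mul_rpow (hp i) (Real.exp_nonneg _),
      mul_mul_mul_comm, ← Real.rpow_add_of_nonneg (hp i) hθ0.le hθ'.le, ← Real.exp_mul,
      ← Real.exp_mul, ← Real.exp_add, add_sub_cancel, Real.rpow_one, mul_comm θ,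
      mul_comm (1 - θ)]
  have hholder := Real.inner_le_Lp_mul_Lq_of_nonneg Finset.univ hconj
    (fun i _ => Real.rpow_nonneg (ha i) θ) (fun i _ => Real.rpow_nonneg (hb i) (1 - θ))
  simpa only [hsplit, Real.rpow_rpow_inv (ha _) hθ0.ne', Real.rpow_rpow_inv (hb _) hθ'.ne',
    one_div, inv_inv] using hholder

lemma sum_mul_exp_quarter_le (hp : ∀ i, 0 ≤ p i) {f g h : ι → ℝ} {a b : ℝ} (ha : 0 < a)
    (hab : a ≤ b) (hf : ∑ i, p i * Real.exp (f i / 4) ≤ 1 / a)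
    (hg : ∑ i, p i * Real.exp (g i / 4) ≤ 1 / b)
    (hh : ∀ θ ∈ Set.Icc (0 : ℝ) 1, ∀ i, h i ≤ (1 - θ) ^ 2 + (θ * f i + (1 - θ) * g i)) :
    ∑ i, p i * Real.exp (h i / 4) ≤ 1 / b * (2 - a / b) := by
  have hb : 0 < b := ha.trans_le hab
  obtain ⟨θ, hθ, hθr⟩ := exists_rpow_neg_mul_exp_le (div_pos ha hb) ((div_le_one hb).2 hab)
  have hθ' : 0 ≤ 1 - θ := sub_nonneg.2 hθ.2
  have hmoment_nonneg (k : ι → ℝ) : 0 ≤ ∑ i, p i * Real.exp (k i / 4) :=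
    Finset.sum_nonneg fun i _ => mul_nonneg (hp i) (Real.exp_nonneg _)
  calc ∑ i, p i * Real.exp (h i / 4)
      ≤ ∑ i, Real.exp ((1 - θ) ^ 2 / 4) *
          (p i * Real.exp (θ * (f i / 4) + (1 - θ) * (g i / 4))) := by
        refine Finset.sum_le_sum fun i _ => ?_
        rw [mul_left_comm, ← Real.exp_add]
        refine mul_le_mul_of_nonneg_left (Real.exp_le_exp.2 ?_) (hp i)
        linarith [hh θ hθ i]
    _ ≤ Real.exp ((1 - θ) ^ 2 / 4) * ((1 / a) ^ θ * (1 / b) ^ (1 - θ)) := by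
        rw [← Finset.mul_sum]
        refine mul_le_mul_of_nonneg_left ?_ (Real.exp_nonneg _)
        refine (sum_mul_exp_convexComb_le hp _ _ hθ).trans ?_
        exact mul_le_mul (Real.rpow_le_rpow (hmoment_nonneg f) hf hθ.1)
          (Real.rpow_le_rpow (hmoment_nonneg g) hg hθ')
          (Real.rpow_nonneg (hmoment_nonneg g) _) (by positivity)
    _ = 1 / b * ((a / b) ^ (-θ) * Real.exp ((1 - θ) ^ 2 / 4)) := by
        rw [Real.rpow_neg (by positivity), ← Real.inv_rpow (by positivity), inv_div,
          Real.div_rpow hb.le ha.le, Real.rpow_sub (by positivity), Real.rpow_one,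
          Real.div_rpow zero_le_one ha.le, Real.div_rpow zero_le_one hb.le, Real.one_rpow]
        field_simp
    _ ≤ 1 / b * (2 - a / b) := mul_le_mul_of_nonneg_left hθr (by positivity)

end ExponentialMoments

section ProductMeasure

variable {Ω : Type*} [Fintype Ω] {m : ℕ} {μ : Ω → ℝ}

lemma sum_eq_sum_sum_cons {M : Type*} [AddCommMonoid M] (f : (Fin (m + 1) → Ω) → M) :
    ∑ x, f x = ∑ ω, ∑ x : Fin m → Ω, f (Fin.cons ω x) := by
  rw [← Fintype.sum_prod_type']
  exact ((Fin.consEquiv fun _ => Ω).sum_comp f).symm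

lemma Pr_mono (hμ0 : ∀ ω, 0 ≤ μ ω) {S T : Set (Fin m → Ω)} (h : S ⊆ T) : Pr μ S ≤ Pr μ T :=
  Finset.sum_le_sum fun x _ =>
    Set.indicator_le_indicator_of_subset h (fun y => Finset.prod_nonneg fun j _ => hμ0 (y j)) x

lemma Pr_empty : Pr μ (∅ : Set (Fin m → Ω)) = 0 := by
  simp [Pr]

lemma Pr_nonneg (hμ0 : ∀ ω, 0 ≤ μ ω) (S : Set (Fin m → Ω)) : 0 ≤ Pr μ S :=
  Pr_empty.symm.trans_le (Pr_mono hμ0 S.empty_subset)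

lemma nonempty_of_Pr_pos {S : Set (Fin m → Ω)} (hS : 0 < Pr μ S) : S.Nonempty := by
  rw [Set.nonempty_iff_ne_empty]
  rintro rfl
  exact hS.ne' Pr_empty

lemma Pr_succ (S : Set (Fin (m + 1) → Ω)) : Pr μ S = ∑ ω, μ ω * Pr μ (headFiber ω S) := by
  classical
  simp only [Pr, sum_eq_sum_sum_cons, Finset.mul_sum]
  refine Finset.sum_congr rfl fun ω _ => Finset.sum_congr rfl fun x _ => ?_
  simp [Set.indicator_apply, headFiber, Fin.prod_univ_succ]

lemma Pr_le_Pr_image_tail (hμ0 : ∀ ω, 0 ≤ μ ω) (hμ1 : ∑ ω, μ ω = 1)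
    (A : Set (Fin (m + 1) → Ω)) : Pr μ A ≤ Pr μ (Fin.tail '' A : Set (Fin m → Ω)) := by
  calc Pr μ A = ∑ ω, μ ω * Pr μ (headFiber ω A) := Pr_succ A
    _ ≤ ∑ ω, μ ω * Pr μ (Fin.tail '' A : Set (Fin m → Ω)) :=
        Finset.sum_le_sum fun ω _ => mul_le_mul_of_nonneg_left
          (Pr_mono hμ0 (headFiber_subset_image_tail ω A)) (hμ0 ω)
    _ = Pr μ (Fin.tail '' A : Set (Fin m → Ω)) := by rw [← Finset.sum_mul, hμ1, one_mul]

lemma mul_Pr_le_sum (hμ0 : ∀ ω, 0 ≤ μ ω) {f : (Fin m → Ω) → ℝ} (hf : ∀ x, 0 ≤ f x) (c : ℝ) :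
    c * Pr μ {x | c ≤ f x} ≤ ∑ x, (∏ j, μ (x j)) * f x := by
  rw [Pr, Finset.mul_sum]
  refine Finset.sum_le_sum fun x _ => ?_
  have hp : 0 ≤ ∏ j, μ (x j) := Finset.prod_nonneg fun j _ => hμ0 (x j)
  by_cases hx : x ∈ {x | c ≤ f x}
  · rw [Set.indicator_of_mem hx, mul_comm]
    exact mul_le_mul_of_nonneg_left hx hp
  · rw [Set.indicator_of_notMem hx, mul_zero]
    exact mul_nonneg hp (hf x)

end ProductMeasure

section Induction

variable {Ω : Type*} [Fintype Ω] [DecidableEq Ω] {m : ℕ} {μ : Ω → ℝ}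

lemma sum_mul_exp_hullSqDist_cons_le (hμ0 : ∀ ω, 0 ≤ μ ω)
    (ih : ∀ S : Set (Fin m → Ω), 0 < Pr μ S →
      ∑ x, (∏ j, μ (x j)) * Real.exp (hullSqDist x S / 4) ≤ 1 / Pr μ S)
    {A : Set (Fin (m + 1) → Ω)} (hB : 0 < Pr μ (Fin.tail '' A : Set (Fin m → Ω))) (ω : Ω) :
    ∑ x : Fin m → Ω, (∏ j, μ (x j)) * Real.exp (hullSqDist (Fin.cons ω x) A / 4) ≤
      1 / Pr μ (Fin.tail '' A : Set (Fin m → Ω)) *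
        (2 - Pr μ (headFiber ω A) / Pr μ (Fin.tail '' A : Set (Fin m → Ω))) := by
  have hp (x : Fin m → Ω) : 0 ≤ ∏ j, μ (x j) := Finset.prod_nonneg fun j _ => hμ0 (x j)
  rcases (Pr_nonneg hμ0 (headFiber ω A)).eq_or_lt with hfiber | hfiber
  · have hrec (x : Fin m → Ω) :
        hullSqDist (Fin.cons ω x) A ≤ 1 + hullSqDist x (Fin.tail '' A) := by
      simpa only [Fin.tail_cons] using
        hullSqDist_le_one_add (Fin.cons ω x) (nonempty_of_Pr_pos hB).of_image
    calc _ ≤ ∑ x : Fin m → Ω, Real.exp (1 / 4) *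
          ((∏ j, μ (x j)) * Real.exp (hullSqDist x (Fin.tail '' A) / 4)) := by
          refine Finset.sum_le_sum fun x _ => ?_
          rw [mul_left_comm, ← Real.exp_add]
          refine mul_le_mul_of_nonneg_left (Real.exp_le_exp.2 ?_) (hp x)
          linarith [hrec x]
      _ ≤ 2 * (1 / Pr μ (Fin.tail '' A : Set (Fin m → Ω))) := by
          rw [← Finset.mul_sum]
          refine mul_le_mul (exp_one_quarter_le.trans (by norm_num)) (ih _ hB) ?_ zero_le_two
          exact Finset.sum_nonneg fun x _ => mul_nonneg (hp x) (Real.exp_nonneg _)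
      _ = _ := by rw [← hfiber, zero_div, sub_zero, mul_comm]
  · refine sum_mul_exp_quarter_le hp hfiber (Pr_mono hμ0 (headFiber_subset_image_tail ω A))
      (ih _ hfiber) (ih _ hB) fun θ hθ x => ?_
    simpa only [Fin.tail_cons, Fin.cons_zero] using
      hullSqDist_le_convexComb (x := Fin.cons ω x) hθ (nonempty_of_Pr_pos hfiber)

lemma one_div_mul_two_sub_div_le {a b : ℝ} (ha : 0 < a) (hb : 0 < b) :
    1 / b * (2 - a / b) ≤ 1 / a := by
  rw [div_mul_eq_mul_div, one_mul, div_le_div_iff₀ hb ha, sub_mul, div_mul_eq_mul_div,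
    sub_le_iff_le_add, one_mul, ← sub_le_iff_le_add', le_div_iff₀ hb]
  nlinarith [sq_nonneg (a - b)]

lemma sum_mul_exp_hullSqDist_le (hμ0 : ∀ ω, 0 ≤ μ ω) (hμ1 : ∑ ω, μ ω = 1)
    (A : Set (Fin m → Ω)) (hA : 0 < Pr μ A) :
    ∑ x, (∏ j, μ (x j)) * Real.exp (hullSqDist x A / 4) ≤ 1 / Pr μ A := by
  induction m with
  | zero =>
    obtain rfl : A = Set.univ := Subsingleton.eq_univ_of_nonempty (nonempty_of_Pr_pos hA)
    have hdist (x : Fin 0 → Ω) : hullSqDist x Set.univ = 0 := by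
      obtain ⟨v, -, hv⟩ := exists_mem_mismatchHull_sum_sq_eq x Set.univ_nonempty
      simpa using hv.symm
    simp [hdist, Pr]
  | succ m ih =>
    have hB := hA.trans_le (Pr_le_Pr_image_tail hμ0 hμ1 A)
    set b := Pr μ (Fin.tail '' A : Set (Fin m → Ω))
    calc ∑ x, (∏ j, μ (x j)) * Real.exp (hullSqDist x A / 4)
        = ∑ ω, μ ω * ∑ x : Fin m → Ω,
            (∏ j, μ (x j)) * Real.exp (hullSqDist (Fin.cons ω x) A / 4) := by
          simp [sum_eq_sum_sum_cons, Fin.prod_univ_succ, Finset.mul_sum, mul_assoc]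
      _ ≤ ∑ ω, μ ω * (1 / b * (2 - Pr μ (headFiber ω A) / b)) :=
          Finset.sum_le_sum fun ω _ => mul_le_mul_of_nonneg_left
            (sum_mul_exp_hullSqDist_cons_le hμ0 ih hB ω) (hμ0 ω)
      _ = 1 / b * ((∑ ω, μ ω) * 2 - (∑ ω, μ ω * Pr μ (headFiber ω A)) / b) := by
          rw [Finset.sum_mul, Finset.sum_div, ← Finset.sum_sub_distrib, Finset.mul_sum]
          exact Finset.sum_congr rfl fun ω _ => by ring
      _ = 1 / b * (2 - Pr μ A / b) := by rw [hμ1, one_mul, ← Pr_succ]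
      _ ≤ 1 / Pr μ A := one_div_mul_two_sub_div_le hA hB

end Induction

/-- Talagrand's convex distance inequality: For every `A ⊆ Ω^m` with
`μ^m(A) > 0`, `∫ exp(d_T(x,A)²/4) dμ^m(x) ≤ 1/μ^m(A)`, and consequently for every
`s > 0`, `P{ d_T(x,A) ≥ s } ≤ e^(−s²/4) / μ^m(A)`. -/
theorem talagrand_convex_distance
    {Ω : Type*} [Fintype Ω] [Nonempty Ω] [DecidableEq Ω]
    (μ : Ω → ℝ) (hμ0 : ∀ ω, 0 ≤ μ ω) (hμ1 : ∑ ω, μ ω = 1)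
    (m : ℕ) (hm : 1 ≤ m)
    (A : Set (Fin m → Ω)) (hA : 0 < Pr μ A) :
    (∑ x : Fin m → Ω, (∏ j, μ (x j)) * Real.exp (convexDist x A ^ 2 / 4) ≤ 1 / Pr μ A)
      ∧ ∀ s : ℝ, 0 < s →
          Pr μ {x : Fin m → Ω | s ≤ convexDist x A} ≤ Real.exp (-s ^ 2 / 4) / Pr μ A := by
  have hmoment : ∑ x : Fin m → Ω, (∏ j, μ (x j)) * Real.exp (convexDist x A ^ 2 / 4) ≤
      1 / Pr μ A := by
    refine le_trans (Finset.sum_le_sum fun x _ => ?_) (sum_mul_exp_hullSqDist_le hμ0 hμ1 A hA)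
    have hdist := convexDist_sq_le_hullSqDist x (nonempty_of_Pr_pos hA)
    have hp : 0 ≤ ∏ j, μ (x j) := Finset.prod_nonneg fun j _ => hμ0 (x j)
    gcongr
  refine ⟨hmoment, fun s hs => ?_⟩
  have hsub : {x | s ≤ convexDist x A} ⊆
      {x | Real.exp (s ^ 2 / 4) ≤ Real.exp (convexDist x A ^ 2 / 4)} := fun x hx =>
    Real.exp_le_exp.2 (div_le_div_of_nonneg_right (pow_le_pow_left₀ hs.le hx 2) zero_le_four)
  have hmarkov : Real.exp (s ^ 2 / 4) * Pr μ {x | s ≤ convexDist x A} ≤ 1 / Pr μ A :=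
    (mul_le_mul_of_nonneg_left (Pr_mono hμ0 hsub) (Real.exp_nonneg _)).trans
      ((mul_Pr_le_sum hμ0 (fun _ => Real.exp_nonneg _) _).trans hmoment)
  rw [neg_div, Real.exp_neg, div_eq_mul_one_div, ← div_eq_inv_mul, le_div_iff₀' (Real.exp_pos _)]
  exact hmarkov
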